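/- arXiv:0812.1752 — 3 statements merged into one kernel-verified Lean document; each statement's English description precedes it below -/
import Mathlib

section
/- Let K ≥ 1 and let a = (a_0, a_1, ..., a_K) be a nonzero vector of real numbers. Define the cosine polynomials C_a(x) = ∑_{k=0}^{K} a_k cos(kx) and C_ā(x) = ∑_{k=0}^{K} a_{K-k} cos(kx) (the polynomial with coefficients in reverse order). Then Z(C_a) + Z(C_ā) ≥ 2K, where Z(f) denotes the number of zeros of f in one period [0, 2π), counted with multiplicity. -/
/-!
Write `P(e^{ix}) = s(x) e^{iφ(x)}` with `P = ∑ a_k z^k`, a real amplitude `s` of either sign and a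
continuous phase `φ`. Such a phase exists: off the unit circle a factor `e^{ix} - w` never vanishes
and has a continuous logarithm, and for `w = e^{iα}` the half-angle formula gives
`e^{ix} - w = 2 sin((x - α)/2) e^{i(x + α + π)/2}`. Since `s` may change sign, `φ` increases over a
period by `N π` for some integer `N`. Now `C_a = s cos φ`, while `C_ā` is the real part of
`e^{-iKx} P(e^{ix})`, that is, `s cos (φ - K x)`. The two phases increase by `N π` and `(N - 2K) π`,
and a phase moving by `π` meets a zero of the cosine, so there are at least
`|N| + |N - 2K| ≥ 2K` zeros, even without multiplicity.
-/

open Real Set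
open scoped ENNReal

/-- The multiplicity of a zero `x` of `f`: the least `n ≥ 1` such that the
`n`-th derivative of `f` at `x` is nonzero. -/
noncomputable def zeroMult (f : ℝ → ℝ) (x : ℝ) : ℕ :=
  sInf {n : ℕ | 1 ≤ n ∧ iteratedDeriv n f x ≠ 0}

/-- The number of zeros of `f` in one period `[0, 2π)`, counted with multiplicity. -/
noncomputable def Zcount (f : ℝ → ℝ) : ℝ≥0∞ :=
  ∑' x : {x : ℝ // x ∈ Set.Ico (0 : ℝ) (2 * Real.pi) ∧ f x = 0},
    (zeroMult f x.1 : ℝ≥0∞)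

lemma zeroMult_ne_zero {f : ℝ → ℝ} (hf : AnalyticOnNhd ℝ f univ) (hf₀ : f ≠ 0) {x : ℝ}
    (hx : f x = 0) : zeroMult f x ≠ 0 := by
  intro hmult
  have hempty : {n : ℕ | 1 ≤ n ∧ iteratedDeriv n f x ≠ 0} = ∅ :=
    (Nat.sInf_eq_zero.mp hmult).resolve_left fun h ↦ absurd h.1 (by simp)
  have hderiv (n : ℕ) : iteratedDeriv n f x = 0 := by
    rcases n.eq_zero_or_pos with rfl | hn
    · simpa using hx
    · by_contra h
      exact eq_empty_iff_forall_notMem.mp hempty n ⟨hn, h⟩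
  have hf' (y : ℝ) : AnalyticAt ℝ f y := hf y (mem_univ y)
  have horder : analyticOrderAt f x = ⊤ := ENat.eq_top_iff_forall_ge.mpr fun _ ↦
    (natCast_le_analyticOrderAt_iff_iteratedDeriv_eq_zero (hf' x)).mpr fun i _ ↦ hderiv i
  exact hf₀ ((AnalyticOnNhd.analyticOrderAt_eq_top_iff_eq_zero x hf').mp horder)

lemma encard_zeros_le_Zcount {f : ℝ → ℝ} (hf : AnalyticOnNhd ℝ f univ) (hf₀ : f ≠ 0) :
    ({x ∈ Ico 0 (2 * π) | f x = 0}.encard : ℝ≥0∞) ≤ Zcount f := by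
  rw [← ENNReal.tsum_set_one]
  refine ENNReal.tsum_le_tsum fun x ↦ ?_
  exact_mod_cast Nat.one_le_iff_ne_zero.mpr (zeroMult_ne_zero hf hf₀ x.2.2)

lemma linearIndependent_cos_nat_mul :
    LinearIndependent ℝ (fun (n : ℕ) (x : ℝ) ↦ cos (n * x)) := by
  let evalCos : Polynomial ℝ →ₗ[ℝ] ℝ → ℝ := LinearMap.pi fun x ↦ Polynomial.leval (cos x)
  have hinj : LinearMap.ker evalCos = ⊥ := by
    refine LinearMap.ker_eq_bot'.mpr fun p hp ↦ ?_
    refine p.eq_zero_of_infinite_isRoot ((Icc_infinite (by norm_num : (-1 : ℝ) < 1)).mono ?_)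
    intro y hy
    simpa [evalCos, cos_arccos hy.1 hy.2] using congrFun hp (arccos y)
  have hT : evalCos ∘ Polynomial.Chebyshev.chebyshevTsequence ℝ =
      fun (n : ℕ) x ↦ cos (n * x) := by
    ext n x
    simp [evalCos, Polynomial.Chebyshev.chebyshevTsequence]
  exact hT ▸ (Polynomial.Chebyshev.chebyshevTsequence ℝ).linearIndependent.map' evalCos hinj

lemma sum_mul_cos_ne_zero {n : ℕ} {a : Fin n → ℝ} (ha : a ≠ 0) :
    (fun x : ℝ ↦ ∑ k, a k * cos ((k : ℕ) * x)) ≠ 0 := by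
  have hli := linearIndependent_cos_nat_mul.comp (fun k : Fin n ↦ (k : ℕ)) Fin.val_injective
  refine fun h ↦ ha (funext (Fintype.linearIndependent_iff.mp hli a ?_))
  ext x
  simpa using congrFun h x

lemma encard_zeros_sum_mul_cos_le_Zcount {n : ℕ} {a : Fin n → ℝ} (ha : a ≠ 0) :
    ({x ∈ Ico 0 (2 * π) | ∑ k, a k * cos ((k : ℕ) * x) = 0}.encard : ℝ≥0∞) ≤
      Zcount (fun x ↦ ∑ k, a k * cos ((k : ℕ) * x)) :=
  encard_zeros_le_Zcount (fun x _ ↦ by fun_prop) (sum_mul_cos_ne_zero ha)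

lemma natCast_le_encard_cos_eq_zero (c : ℝ) (n : ℕ) :
    (n : ℕ∞) ≤ {θ ∈ Ico c (c + n * π) | cos θ = 0}.encard := by
  let zero : Fin n → ℝ := fun j ↦ toIcoMod pi_pos c (π / 2) + (j : ℕ) * π
  have hinj : Function.Injective zero := fun i j hij ↦ by
    simpa [zero, pi_ne_zero, Fin.ext_iff] using hij
  have hsub : range zero ⊆ {θ ∈ Ico c (c + n * π) | cos θ = 0} := by
    rintro _ ⟨j, rfl⟩
    have hj : ((j : ℕ) : ℝ) + 1 ≤ n := by exact_mod_cast j.2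
    have hjpi : 0 ≤ ((j : ℕ) : ℝ) * π := by positivity
    have hbase := toIcoMod_mem_Ico pi_pos c (π / 2)
    refine ⟨⟨by linarith [hbase.1], by nlinarith [hbase.2, pi_pos]⟩, ?_⟩
    refine cos_eq_zero_iff.mpr ⟨(j : ℕ) - toIcoDiv pi_pos c (π / 2), ?_⟩
    simp only [zero, ← self_sub_toIcoDiv_zsmul, zsmul_eq_mul]
    push_cast
    ring
  calc (n : ℕ∞) ≤ (range zero).encard := by simpa using hinj.encard_range
    _ ≤ _ := encard_le_encard hsub

lemma isSimplyConnected_univ {X : Type*} [TopologicalSpace X] [SimplyConnectedSpace X] :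
    IsSimplyConnected (univ : Set X) :=
  (Homeomorph.Set.univ X).toHomotopyEquiv.simplyConnectedSpace_iff.mpr inferInstance

lemma exp_mul_I_sub_exp_mul_I (u v : ℂ) :
    Complex.exp (u * Complex.I) - Complex.exp (v * Complex.I) =
      2 * Complex.sin ((u - v) / 2) * Complex.exp (((u + v) / 2 + π / 2) * Complex.I) := by
  have hu : u * Complex.I = (u + v) / 2 * Complex.I + (u - v) / 2 * Complex.I := by ring
  have hv : v * Complex.I = (u + v) / 2 * Complex.I + -((u - v) / 2) * Complex.I := by ring
  calc Complex.exp (u * Complex.I) - Complex.exp (v * Complex.I)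
      = Complex.exp ((u + v) / 2 * Complex.I) * (Complex.exp ((u - v) / 2 * Complex.I) -
          Complex.exp (-((u - v) / 2) * Complex.I)) := by
        rw [hu, hv, Complex.exp_add, Complex.exp_add, mul_sub]
    _ = 2 * Complex.sin ((u - v) / 2) * (Complex.exp ((u + v) / 2 * Complex.I) * Complex.I) := by
        rw [Complex.two_sin]
        linear_combination (Complex.exp ((u + v) / 2 * Complex.I) *
          (Complex.exp ((u - v) / 2 * Complex.I) -
            Complex.exp (-((u - v) / 2) * Complex.I))) * Complex.I_sq
    _ = _ := by rw [add_mul _ (π / 2 : ℂ), Complex.exp_add, Complex.exp_pi_div_two_mul_I]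

/-- `F` has a polar form on `ℝ` with continuous phase growing by `N * π` over `[0, 2 * π]`. The
amplitude may have either sign, so that the phase is continuous also across the zeros of `F`. -/
def HasPhaseIncrease (F : ℝ → ℂ) (N : ℤ) : Prop :=
  ∃ φ : ℝ → ℝ, Continuous φ ∧ φ (2 * π) = φ 0 + N * π ∧
    ∀ x, ∃ s : ℝ, F x = s * Complex.exp (φ x * Complex.I)

namespace HasPhaseIncrease

variable {F G : ℝ → ℂ} {M N : ℤ}

lemma mul (hF : HasPhaseIncrease F M) (hG : HasPhaseIncrease G N) :
    HasPhaseIncrease (fun x ↦ F x * G x) (M + N) := by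
  obtain ⟨φ, hφ, hφM, hFφ⟩ := hF
  obtain ⟨ψ, hψ, hψN, hGψ⟩ := hG
  refine ⟨fun x ↦ φ x + ψ x, hφ.add hψ, ?_, fun x ↦ ?_⟩
  · simp only [hφM, hψN]
    push_cast
    ring
  · obtain ⟨s, hs⟩ := hFφ x
    obtain ⟨t, ht⟩ := hGψ x
    refine ⟨s * t, ?_⟩
    simp only [hs, ht, Complex.ofReal_add, Complex.ofReal_mul, add_mul, Complex.exp_add]
    ring

lemma conj (hF : HasPhaseIncrease F N) :
    HasPhaseIncrease (fun x ↦ starRingEnd ℂ (F x)) (-N) := by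
  obtain ⟨φ, hφ, hφN, hFφ⟩ := hF
  refine ⟨-φ, hφ.neg, ?_, fun x ↦ ?_⟩
  · simp only [Pi.neg_apply, hφN]
    push_cast
    ring
  · obtain ⟨s, hs⟩ := hFφ x
    exact ⟨s, by simp [hs, ← Complex.exp_conj]⟩

lemma const (c : ℂ) : HasPhaseIncrease (fun _ ↦ c) 0 :=
  ⟨fun _ ↦ c.arg, continuous_const, by simp, fun _ ↦ ⟨‖c‖, (Complex.norm_mul_exp_arg_mul_I c).symm⟩⟩

lemma exp_int_mul (n : ℤ) :
    HasPhaseIncrease (fun x ↦ Complex.exp ((n * x : ℝ) * Complex.I)) (2 * n) :=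
  ⟨fun x ↦ n * x, by fun_prop, by push_cast; ring, fun _ ↦ ⟨1, by simp⟩⟩

lemma exists_of_ne_zero (hF : Continuous F) (hper : F (2 * π) = F 0) (hF₀ : ∀ x, F x ≠ 0) :
    ∃ N, HasPhaseIncrease F N := by
  obtain ⟨L, hL, hLF⟩ := Complex.exists_continuousOn_eqOn_exp_comp (U := univ)
    isSimplyConnected_univ isOpen_univ hF.continuousOn (by simpa using hF₀)
  have hexp (x : ℝ) : Complex.exp (L x) = F x := hLF (mem_univ x)
  obtain ⟨n, hn⟩ := Complex.exp_eq_exp_iff_exists_int.mp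
    ((hexp (2 * π)).trans (hper.trans (hexp 0).symm))
  refine ⟨2 * n, fun x ↦ (L x).im,
    Complex.continuous_im.comp (continuousOn_univ.mp hL), ?_, fun x ↦ ⟨rexp (L x).re, ?_⟩⟩
  · have him : (n * (2 * π * Complex.I)).im = n * (2 * π) := by simp
    simp only [hn, Complex.add_im, him]
    push_cast
    ring
  · rw [← hexp, Complex.ofReal_exp, ← Complex.exp_add, Complex.re_add_im]

lemma exp_sub_of_norm_eq_one {w : ℂ} (hw : ‖w‖ = 1) :
    HasPhaseIncrease (fun x ↦ Complex.exp (x * Complex.I) - w) 1 := by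
  have hw' : w = Complex.exp (w.arg * Complex.I) := by
    simpa [hw] using (Complex.norm_mul_exp_arg_mul_I w).symm
  refine ⟨fun x ↦ (x + w.arg) / 2 + π / 2, by fun_prop, by push_cast; ring,
    fun x ↦ ⟨2 * sin ((x - w.arg) / 2), ?_⟩⟩
  nth_rewrite 1 [hw']
  simpa using exp_mul_I_sub_exp_mul_I x w.arg

lemma exists_exp_sub (w : ℂ) :
    ∃ N, HasPhaseIncrease (fun x ↦ Complex.exp (x * Complex.I) - w) N := by
  by_cases hw : ‖w‖ = 1
  · exact ⟨1, exp_sub_of_norm_eq_one hw⟩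
  · refine exists_of_ne_zero (by fun_prop) (by simp) fun x h ↦ hw ?_
    rw [← sub_eq_zero.mp h, Complex.norm_exp_ofReal_mul_I]

lemma exists_eval_exp (P : Polynomial ℂ) :
    ∃ N, HasPhaseIncrease (fun x ↦ P.eval (Complex.exp (x * Complex.I))) N := by
  have hmul (Q R : Polynomial ℂ) :
      (∃ N, HasPhaseIncrease (fun x ↦ Q.eval (Complex.exp (x * Complex.I))) N) →
      (∃ N, HasPhaseIncrease (fun x ↦ R.eval (Complex.exp (x * Complex.I))) N) →
      ∃ N, HasPhaseIncrease (fun x ↦ (Q * R).eval (Complex.exp (x * Complex.I))) N := by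
    rintro ⟨M, hM⟩ ⟨N, hN⟩
    exact ⟨M + N, by simpa only [Polynomial.eval_mul] using hM.mul hN⟩
  rw [(IsAlgClosed.splits P).eq_prod_roots]
  refine hmul _ _ ⟨0, by simpa using const P.leadingCoeff⟩ ?_
  refine Multiset.prod_induction _ _ hmul ⟨0, by simpa using const 1⟩ fun Q hQ ↦ ?_
  obtain ⟨w, -, rfl⟩ := Multiset.mem_map.mp hQ
  simpa using exists_exp_sub w

lemma natCast_le_encard_re_eq_zero {n : ℕ} (hF : HasPhaseIncrease F n) :
    (n : ℕ∞) ≤ {x ∈ Ico 0 (2 * π) | (F x).re = 0}.encard := by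
  obtain ⟨φ, hφ, hφn, hFφ⟩ := hF
  have hsub : {θ ∈ Ico (φ 0) (φ 0 + n * π) | cos θ = 0} ⊆
      φ '' {x ∈ Ico 0 (2 * π) | (F x).re = 0} := by
    rintro θ ⟨hθ, hcos⟩
    obtain ⟨x, hx, rfl⟩ := intermediate_value_Ico two_pi_pos.le hφ.continuousOn
      (by simpa [hφn] using hθ)
    obtain ⟨s, hs⟩ := hFφ x
    exact ⟨x, ⟨hx, by simp [hs, hcos, Complex.exp_ofReal_mul_I_re]⟩, rfl⟩
  calc (n : ℕ∞) ≤ {θ ∈ Ico (φ 0) (φ 0 + n * π) | cos θ = 0}.encard :=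
        natCast_le_encard_cos_eq_zero _ _
    _ ≤ (φ '' {x ∈ Ico 0 (2 * π) | (F x).re = 0}).encard := encard_le_encard hsub
    _ ≤ _ := encard_image_le _ _

lemma natAbs_le_encard_re_eq_zero (hF : HasPhaseIncrease F N) :
    (N.natAbs : ℕ∞) ≤ {x ∈ Ico 0 (2 * π) | (F x).re = 0}.encard := by
  obtain ⟨n, rfl | rfl⟩ := N.eq_nat_or_neg
  · simpa using hF.natCast_le_encard_re_eq_zero
  · have hconj : HasPhaseIncrease (fun x ↦ starRingEnd ℂ (F x)) n := by simpa using hF.conj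
    simpa using hconj.natCast_le_encard_re_eq_zero

lemma two_mul_le_encard_re_eq_zero_add (hF : HasPhaseIncrease F N) (K : ℕ) :
    (2 * K : ℕ∞) ≤ {x ∈ Ico 0 (2 * π) | (F x).re = 0}.encard +
      {x ∈ Ico 0 (2 * π) | (Complex.exp (-(K * x : ℝ) * Complex.I) * F x).re = 0}.encard := by
  have hG : HasPhaseIncrease (fun x ↦ Complex.exp (-(K * x : ℝ) * Complex.I) * F x)
      (2 * (-K : ℤ) + N) := by
    simpa using (exp_int_mul (-K : ℤ)).mul hF
  calc (2 * K : ℕ∞) ≤ N.natAbs + (2 * (-K : ℤ) + N).natAbs := by norm_cast; omega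
    _ ≤ _ := add_le_add hF.natAbs_le_encard_re_eq_zero hG.natAbs_le_encard_re_eq_zero

end HasPhaseIncrease

theorem palindromic_cosine_zero_count_general (K : ℕ) (a β : Fin (K + 1) → ℝ) :
    (2 * K : ℕ∞) ≤
      {x ∈ Ico 0 (2 * π) | ∑ k, a k * cos ((k : ℕ) * x + β k) = 0}.encard +
      {x ∈ Ico 0 (2 * π) |
        ∑ k : Fin (K + 1), a k.rev * cos ((k : ℕ) * x - β k.rev) = 0}.encard := by
  let P : Polynomial ℂ :=
    ∑ k, Polynomial.C (a k * Complex.exp (β k * Complex.I)) * Polynomial.X ^ (k : ℕ)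
  have hP (x : ℝ) : P.eval (Complex.exp (x * Complex.I)) =
      ∑ k, a k * Complex.exp (((k : ℕ) * x + β k : ℝ) * Complex.I) := by
    simp only [P, Polynomial.eval_finsetSum, Polynomial.eval_mul, Polynomial.eval_C,
      Polynomial.eval_pow, Polynomial.eval_X, ← Complex.exp_nat_mul, mul_assoc, ← Complex.exp_add]
    refine Finset.sum_congr rfl fun k _ ↦ ?_
    push_cast
    ring_nf
  have hre (x : ℝ) : (P.eval (Complex.exp (x * Complex.I))).re =
      ∑ k, a k * cos ((k : ℕ) * x + β k) := by
    simp only [hP, Complex.re_sum, Complex.re_ofReal_mul, Complex.exp_ofReal_mul_I_re]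
  have hre_rev (x : ℝ) :
      (Complex.exp (-(K * x : ℝ) * Complex.I) * P.eval (Complex.exp (x * Complex.I))).re =
        ∑ k : Fin (K + 1), a k.rev * cos ((k : ℕ) * x - β k.rev) := by
    rw [← Equiv.sum_comp Fin.revPerm, hP, Finset.mul_sum, Complex.re_sum]
    refine Finset.sum_congr rfl fun k _ ↦ ?_
    have hk : ((k.rev : ℕ) : ℝ) = K - (k : ℕ) := by
      rw [Fin.val_rev, Nat.add_sub_add_right, Nat.cast_sub k.is_le]
    rw [mul_left_comm, ← Complex.exp_add, ← Complex.ofReal_neg, ← add_mul, ← Complex.ofReal_add,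
      Complex.re_ofReal_mul, Complex.exp_ofReal_mul_I_re, Fin.revPerm_apply, Fin.rev_rev, hk,
      ← cos_neg]
    ring_nf
  obtain ⟨N, hN⟩ := HasPhaseIncrease.exists_eval_exp P
  simpa only [hre, hre_rev] using hN.two_mul_le_encard_re_eq_zero_add K

theorem palindromic_cosine_zero_count (K : ℕ) (hK : 1 ≤ K)
    (a : Fin (K + 1) → ℝ) (ha : a ≠ 0) :
    (2 * K : ℝ≥0∞) ≤
      Zcount (fun x => ∑ k : Fin (K + 1), a k * Real.cos ((k : ℕ) * x)) +
      Zcount (fun x => ∑ k : Fin (K + 1), a (Fin.rev k) * Real.cos ((k : ℕ) * x)) := by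
  have ha_rev : (fun k : Fin (K + 1) ↦ a k.rev) ≠ 0 := fun h ↦
    ha (funext fun k ↦ by simpa using congrFun h k.rev)
  have hdistinct := ENat.toENNReal_le.mpr (palindromic_cosine_zero_count_general K a 0)
  refine le_trans ?_ (add_le_add (encard_zeros_sum_mul_cos_le_Zcount ha)
    (encard_zeros_sum_mul_cos_le_Zcount ha_rev))
  simpa using hdistinct
end

section
/- Let 0 ≤ L ≤ M with M ≥ 1, and let a_L, a_{L+1}, ..., a_M be independent, identically distributed real random variables. Let C(x) = ∑_{k=L}^{M} a_k cos(kx), and suppose the event E = {(a_L,...,a_M) ≠ 0} has positive probability. Then the conditional expectation of Z(C) given E is at least L + M; equivalently, E[Z(C)·1_E] ≥ (L+M) · P(E). -/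
open Real Set
open scoped ENNReal

open MeasureTheory ProbabilityTheory

/-!
Let `P z = ∑ k, v k * z ^ p k`, with `p k + p (σ k) = D` for a permutation `σ`. Factoring `P`
over its roots, `P (e^{ix}) = S x * e^{iθ x}` with `S` real and `θ` continuous, increasing by
`m π` over a period: a root inside, on or outside the unit circle contributes `2`, `1` or `0` to
`m`. The cosine polynomial `C = Re P (e^{ix})` vanishes whenever `cos θ` does, hence at least
`m` times. Permuting the coefficients by `σ` replaces `P (e^{ix})` by `e^{iDx}` times its
conjugate, hence `m` by `2 D - m`, so `C` and its permuted companion have at least `2 D` zeros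
together. When both have the same law, each has at least `D` zeros on average. For i.i.d.
coefficients on `L, …, M`, take `σ` to be the reversal and `D = L + M`.

Distinct zeros suffice for the lower bound, and unlike `Zcount` their number is readily seen to
depend measurably on the coefficients.
-/

/-- A signed polar form `g x = S x * exp (i θ x)` on `[0, 2π]`, with `θ` continuous and increasing
by `m π` overall: `g` makes `m` half turns around the origin. The modulus `S` is real and may change
sign, so that `g` is allowed to pass through the origin. -/
def HasHalfTurns (g : ℝ → ℂ) (m : ℤ) : Prop :=
  ∃ S θ : ℝ → ℝ, Continuous θ ∧ θ (2 * π) = θ 0 + m * π ∧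
    ∀ x, g x = S x * Complex.exp (θ x * Complex.I)

namespace HasHalfTurns

lemma congr {f g : ℝ → ℂ} {m : ℤ} (hf : HasHalfTurns f m) (hfg : ∀ x, f x = g x) :
    HasHalfTurns g m :=
  funext hfg ▸ hf

lemma const (c : ℂ) : HasHalfTurns (fun _ => c) 0 :=
  ⟨fun _ => ‖c‖, fun _ => c.arg, by fun_prop, by simp, fun _ => by simp⟩

lemma exp_int_mul (n : ℤ) : HasHalfTurns (fun x => Complex.exp ((n * x : ℝ) * Complex.I)) (2 * n) :=
  ⟨fun _ => 1, fun x => n * x, by fun_prop, by push_cast; ring, fun x => by simp⟩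

lemma mul {f g : ℝ → ℂ} {m n : ℤ} (hf : HasHalfTurns f m) (hg : HasHalfTurns g n) :
    HasHalfTurns (fun x => f x * g x) (m + n) := by
  obtain ⟨S, θ, hθ, hm, hf⟩ := hf
  obtain ⟨T, φ, hφ, hn, hg⟩ := hg
  refine ⟨fun x => S x * T x, fun x => θ x + φ x, by fun_prop, ?_, fun x => ?_⟩
  · simp only [hm, hn]; push_cast; ring
  · simp only [hf, hg]; push_cast; rw [add_mul, Complex.exp_add]; ring

lemma conj {g : ℝ → ℂ} {m : ℤ} (hg : HasHalfTurns g m) :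
    HasHalfTurns (fun x => starRingEnd ℂ (g x)) (-m) := by
  obtain ⟨S, θ, hθ, hm, hg⟩ := hg
  refine ⟨S, fun x => -θ x, by fun_prop, ?_, fun x => ?_⟩
  · simp only [hm]; push_cast; ring
  · simp [hg, ← Complex.exp_conj]

lemma of_mem_slitPlane {g : ℝ → ℂ} (hg : Continuous g) (hslit : ∀ x, g x ∈ Complex.slitPlane)
    (hper : g (2 * π) = g 0) : HasHalfTurns g 0 := by
  refine ⟨fun x => ‖g x‖, fun x => (g x).arg, ?_, by simp [hper], fun x => by simp⟩
  exact continuous_iff_continuousAt.2 fun x =>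
    (Complex.continuousAt_arg (hslit x)).comp hg.continuousAt

lemma one_add_of_norm_lt_one {u : ℝ → ℂ} (hu : Continuous u) (hlt : ∀ x, ‖u x‖ < 1)
    (hper : u (2 * π) = u 0) : HasHalfTurns (fun x => 1 + u x) 0 :=
  of_mem_slitPlane (by fun_prop) (fun x => Complex.mem_slitPlane_of_norm_lt_one (hlt x))
    (by rw [hper])

lemma exp_sub_exp (α : ℝ) :
    HasHalfTurns (fun x => Complex.exp (x * Complex.I) - Complex.exp (α * Complex.I)) 1 := by
  refine ⟨fun x => 2 * Real.sin ((x - α) / 2), fun x => (x + α) / 2 + π / 2, by fun_prop,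
    by push_cast; ring, fun x => ?_⟩
  have hx : (x : ℂ) * Complex.I = (x + α) / 2 * Complex.I + (x - α) / 2 * Complex.I := by ring
  have hα : (α : ℂ) * Complex.I = (x + α) / 2 * Complex.I + -((x - α) / 2) * Complex.I := by ring
  push_cast
  rw [Complex.two_sin, add_mul, Complex.exp_add _ (π / 2 * Complex.I),
    Complex.exp_pi_div_two_mul_I, hx, hα, Complex.exp_add, Complex.exp_add]
  linear_combination (Complex.exp ((x - α) / 2 * Complex.I) -
    Complex.exp (-((x - α) / 2) * Complex.I)) * Complex.exp ((x + α) / 2 * Complex.I) *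
      Complex.I_mul_I

lemma exists_exp_sub_const (w : ℂ) :
    ∃ m, HasHalfTurns (fun x => Complex.exp (x * Complex.I) - w) m := by
  have hexp : Complex.exp ((2 * π : ℝ) * Complex.I) = 1 := by
    push_cast; exact Complex.exp_two_pi_mul_I
  rcases lt_trichotomy ‖w‖ 1 with hw | hw | hw
  · have hfactor := (exp_int_mul 1).mul <|
      one_add_of_norm_lt_one (u := fun x => -w * Complex.exp (-(x * Complex.I))) (by fun_prop)
        (fun x => by simpa [Complex.norm_exp] using hw) (by rw [Complex.exp_neg, hexp]; simp)
    refine ⟨_, hfactor.congr fun x => ?_⟩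
    rw [mul_add, mul_left_comm, Int.cast_one, one_mul, ← Complex.exp_add]
    simp [sub_eq_add_neg]
  · have hw' : w = Complex.exp (w.arg * Complex.I) := by
      simpa [hw] using (Complex.norm_mul_exp_arg_mul_I w).symm
    exact ⟨1, hw' ▸ exp_sub_exp w.arg⟩
  · have hw0 : w ≠ 0 := norm_pos_iff.1 (one_pos.trans hw)
    have hfactor := (const (-w)).mul <|
      one_add_of_norm_lt_one (u := fun x => -w⁻¹ * Complex.exp (x * Complex.I)) (by fun_prop)
        (fun x => by simpa [Complex.norm_exp_ofReal_mul_I] using inv_lt_one_of_one_lt₀ hw)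
        (by rw [hexp]; simp)
    refine ⟨_, hfactor.congr fun x => ?_⟩
    field_simp
    ring

lemma exists_polynomial_eval_exp (P : Polynomial ℂ) :
    ∃ m, HasHalfTurns (fun x => P.eval (Complex.exp (x * Complex.I))) m := by
  simp only [(IsAlgClosed.splits P).eval_eq_prod_roots]
  suffices h : ∀ s : Multiset ℂ, ∃ m,
      HasHalfTurns (fun x => (s.map (Complex.exp (x * Complex.I) - ·)).prod) m by
    obtain ⟨m, hm⟩ := h P.roots
    exact ⟨_, (const P.leadingCoeff).mul hm⟩
  intro s
  induction s using Multiset.induction_on with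
  | empty => exact ⟨0, by simpa using const 1⟩
  | cons w s ih =>
    obtain ⟨m, hm⟩ := exists_exp_sub_const w
    obtain ⟨n, hn⟩ := ih
    exact ⟨m + n, by simpa using hm.mul hn⟩

end HasHalfTurns

lemma toNat_le_encard_cos_eq_zero {a b : ℝ} (hab : a ≤ b) {θ : ℝ → ℝ}
    (hθ : ContinuousOn θ (Icc a b)) {m : ℤ} (hm : θ a + m * π ≤ θ b) :
    (m.toNat : ℕ∞) ≤ {x | x ∈ Ico a b ∧ cos (θ x) = 0}.encard := by
  set j : ℤ := ⌈(θ a - π / 2) / π⌉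
  let oddMultiple : Fin m.toNat → ℝ := fun i => π / 2 + (j + (i : ℕ)) * π
  have hinj : Function.Injective oddMultiple := fun i k hik => by
    have := mul_right_cancel₀ pi_ne_zero (add_left_cancel hik)
    exact Fin.ext (by exact_mod_cast add_left_cancel this)
  have hrange : range oddMultiple ⊆ θ '' {x | x ∈ Ico a b ∧ cos (θ x) = 0} := by
    rintro _ ⟨i, rfl⟩
    have hlower : θ a - π / 2 ≤ j * π := (div_le_iff₀ pi_pos).1 (Int.le_ceil _)
    have hupper : (j - 1) * π < θ a - π / 2 :=
      (lt_div_iff₀ pi_pos).1 (by linarith [Int.ceil_lt_add_one ((θ a - π / 2) / π)])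
    have hi : ((i : ℕ) + 1 : ℝ) ≤ m := by
      exact_mod_cast Int.add_one_le_of_lt (Int.lt_toNat.1 i.2)
    have hmem : oddMultiple i ∈ Ico (θ a) (θ b) := by
      have := mul_le_mul_of_nonneg_right hi pi_pos.le
      have : (0 : ℝ) ≤ (i : ℕ) * π := by positivity
      constructor <;> simp only [oddMultiple] <;> linarith
    obtain ⟨x, hx, hxi⟩ := intermediate_value_Ico hab hθ hmem
    refine ⟨x, ⟨hx, ?_⟩, hxi⟩
    rw [hxi, cos_eq_zero_iff]
    exact ⟨j + (i : ℕ), by simp only [oddMultiple]; push_cast; ring⟩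
  calc (m.toNat : ℕ∞) ≤ (range oddMultiple).encard := by simpa using hinj.encard_range
    _ ≤ (θ '' {x | x ∈ Ico a b ∧ cos (θ x) = 0}).encard := encard_le_encard hrange
    _ ≤ _ := encard_image_le _ _

/-- The zeros of `f` in one period `[0, 2π)`, without multiplicity. -/
def periodZeros (f : ℝ → ℝ) : Set ℝ :=
  {x | x ∈ Ico 0 (2 * π) ∧ f x = 0}

lemma HasHalfTurns.toNat_le_encard_periodZeros_re {g : ℝ → ℂ} {m : ℤ} (hg : HasHalfTurns g m) :
    (m.toNat : ℕ∞) ≤ (periodZeros fun x => (g x).re).encard := by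
  obtain ⟨S, θ, hθ, hm, hg⟩ := hg
  refine (toNat_le_encard_cos_eq_zero two_pi_pos.le hθ.continuousOn hm.ge).trans
    (encard_le_encard fun x hx => ⟨hx.1, ?_⟩)
  simp only [hg, Complex.re_ofReal_mul, Complex.exp_ofReal_mul_I_re, hx.2, mul_zero]

section TrigonometricSums

variable {ι : Type*} [Fintype ι]

/-- The cosine polynomial with frequencies `p` and coefficients `v`. -/
noncomputable def cosSum (p : ι → ℕ) (v : ι → ℝ) (x : ℝ) : ℝ :=
  ∑ k, v k * cos (p k * x)

/-- The exponential polynomial with frequencies `p` and coefficients `v`, whose real part is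
`cosSum p v`. -/
noncomputable def expSum (p : ι → ℕ) (v : ι → ℝ) (x : ℝ) : ℂ :=
  ∑ k, v k * Complex.exp ((p k * x : ℝ) * Complex.I)

lemma re_expSum (p : ι → ℕ) (v : ι → ℝ) (x : ℝ) : (expSum p v x).re = cosSum p v x := by
  simp only [expSum, cosSum, Complex.re_sum, Complex.re_ofReal_mul, Complex.exp_ofReal_mul_I_re]

lemma exists_hasHalfTurns_expSum (p : ι → ℕ) (v : ι → ℝ) : ∃ m, HasHalfTurns (expSum p v) m := by
  obtain ⟨m, hm⟩ := HasHalfTurns.exists_polynomial_eval_exp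
    (∑ k, Polynomial.C (v k : ℂ) * Polynomial.X ^ p k)
  refine ⟨m, hm.congr fun x => ?_⟩
  simp [expSum, Polynomial.eval_finsetSum, ← Complex.exp_nat_mul, mul_assoc]

lemma expSum_comp_perm {p : ι → ℕ} {σ : Equiv.Perm ι} {D : ℕ} (hσ : ∀ k, p k + p (σ k) = D)
    (v : ι → ℝ) (x : ℝ) :
    expSum p (v ∘ σ) x
      = Complex.exp ((D * x : ℝ) * Complex.I) * starRingEnd ℂ (expSum p v x) := by
  simp only [expSum, map_sum, Finset.mul_sum, map_mul, Complex.conj_ofReal, ← Complex.exp_conj,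
    Complex.conj_I]
  rw [← Equiv.sum_comp σ fun k => _ * (_ * _)]
  refine Finset.sum_congr rfl fun k _ => ?_
  rw [mul_left_comm, ← Complex.exp_add, ← hσ k, Function.comp_apply]
  congr 2
  push_cast
  ring

lemma two_mul_le_encard_periodZeros_add {p : ι → ℕ} {σ : Equiv.Perm ι} {D : ℕ}
    (hσ : ∀ k, p k + p (σ k) = D) (v : ι → ℝ) :
    (2 * D : ℕ∞) ≤ (periodZeros (cosSum p v)).encard + (periodZeros (cosSum p (v ∘ σ))).encard := by
  obtain ⟨m, hm⟩ := exists_hasHalfTurns_expSum p v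
  have hm' : HasHalfTurns (expSum p (v ∘ σ)) (2 * D + -m) :=
    ((HasHalfTurns.exp_int_mul D).mul hm.conj).congr fun x => by
      rw [expSum_comp_perm hσ, Int.cast_natCast]
  have hzeros := hm.toNat_le_encard_periodZeros_re
  have hzeros' := hm'.toNat_le_encard_periodZeros_re
  simp only [re_expSum] at hzeros hzeros'
  refine le_trans ?_ (add_le_add hzeros hzeros')
  have : 2 * D ≤ m.toNat + (2 * D + -m).toNat := by lia
  exact_mod_cast this

lemma cosSum_ne_zero {p : ι → ℕ} (hp : Function.Injective p) {v : ι → ℝ} (hv : v ≠ 0) :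
    cosSum p v ≠ 0 := by
  intro hzero
  let T : Polynomial.Sequence ℝ := ⟨fun n => Polynomial.Chebyshev.T ℝ n, fun n => by simp⟩
  have hT : ∑ k, v k • T (p k) = 0 := by
    refine Polynomial.eq_zero_of_infinite_isRoot _ ?_
    refine (Icc_infinite (neg_lt_self one_pos)).mono fun y hy => ?_
    rw [← cos_arccos hy.1 hy.2]
    simpa [Polynomial.eval_finsetSum, T, cosSum] using congrFun hzero (arccos y)
  exact hv <| funext <|
    Fintype.linearIndependent_iff.1 (T.linearIndependent.comp p hp) v hT

lemma analyticAt_cosSum (p : ι → ℕ) (v : ι → ℝ) (x : ℝ) : AnalyticAt ℝ (cosSum p v) x := by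
  unfold cosSum
  fun_prop

end TrigonometricSums

lemma one_le_zeroMult {f : ℝ → ℝ} (hf : ∀ x, AnalyticAt ℝ f x) (hf0 : f ≠ 0) {x : ℝ}
    (hx : f x = 0) : 1 ≤ zeroMult f x := by
  suffices h : {n | 1 ≤ n ∧ iteratedDeriv n f x ≠ 0}.Nonempty from (Nat.sInf_mem h).1
  by_contra! hempty
  have hderiv (n : ℕ) : iteratedDeriv n f x = 0 := by
    rcases n.eq_zero_or_pos with rfl | hn
    · simpa using hx
    · by_contra hne
      exact hempty.subset ⟨hn, hne⟩
  have horder : analyticOrderAt f x = ⊤ := ENat.eq_top_iff_forall_ge.2 fun m =>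
    (natCast_le_analyticOrderAt_iff_iteratedDeriv_eq_zero (hf x)).2 fun i _ => hderiv i
  have hf : AnalyticOnNhd ℝ f univ := fun y _ => hf y
  exact hf0 <| funext fun y => hf.eqOn_zero_of_preconnected_of_eventuallyEq_zero
    isPreconnected_univ (mem_univ x) (analyticOrderAt_eq_top.1 horder) (mem_univ y)

lemma encard_periodZeros_le_Zcount {f : ℝ → ℝ} (hf : ∀ x, AnalyticAt ℝ f x) (hf0 : f ≠ 0) :
    ((periodZeros f).encard : ℝ≥0∞) ≤ Zcount f := by
  rw [← ENNReal.tsum_set_one]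
  exact ENNReal.tsum_le_tsum fun x => by exact_mod_cast one_le_zeroMult hf hf0 x.2.2

lemma natCast_le_encard_iff_exists_injective {α : Type*} {s : Set α} {m : ℕ} :
    (m : ℕ∞) ≤ s.encard ↔ ∃ x : Fin m → α, Function.Injective x ∧ ∀ i, x i ∈ s := by
  constructor
  · intro hm
    obtain ⟨t, hts, ht⟩ := exists_subset_encard_eq hm
    have htfin : t.Finite := finite_of_encard_eq_coe ht
    have := htfin.to_subtype
    have hcard : Nat.card t = m := by
      rw [Nat.card_coe_set_eq, ncard_def, ht, ENat.toNat_natCast]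
    exact ⟨fun i => (Finite.equivFinOfCardEq hcard).symm i,
      Subtype.val_injective.comp (Equiv.injective _), fun i => hts (Subtype.coe_prop _)⟩
  · rintro ⟨x, hx, hxs⟩
    calc (m : ℕ∞) ≤ (range x).encard := by simpa using hx.encard_range
      _ ≤ s.encard := encard_le_encard (range_subset_iff.2 hxs)

lemma measurable_of_natCast_le {α : Type*} [MeasurableSpace α] {f : α → ℕ∞}
    (hf : ∀ m : ℕ, MeasurableSet {a | (m : ℕ∞) ≤ f a}) : Measurable f := by
  refine measurable_to_countable' fun n => ?_
  induction n with
  | top =>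
    have : f ⁻¹' {⊤} = ⋂ m : ℕ, {a | (m : ℕ∞) ≤ f a} := by
      ext a
      simp [ENat.eq_top_iff_forall_ge]
    exact this ▸ .iInter hf
  | coe n =>
    have : f ⁻¹' {(n : ℕ∞)} = {a | (n : ℕ∞) ≤ f a} \ {a | ((n + 1 : ℕ) : ℕ∞) ≤ f a} := by
      ext a
      rw [mem_preimage, mem_singleton_iff, eq_comm, le_antisymm_iff]
      simp only [mem_sdiff, mem_ofPred_eq, not_le, Nat.cast_add_one,
        ENat.lt_add_one_iff (ENat.natCast_ne_top n)]
    exact this ▸ (hf n).diff (hf (n + 1))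

lemma isOpen_setOf_injective {ι α : Type*} [Finite ι] [TopologicalSpace α] [T2Space α] :
    IsOpen {x : ι → α | Function.Injective x} := by
  have : {x : ι → α | Function.Injective x} = ⋂ (i) (j) (_ : i ≠ j), {x | x i ≠ x j} := by
    ext x
    simp [Function.Injective, not_imp_not]
  rw [this]
  exact isOpen_iInter_of_finite fun i => isOpen_iInter_of_finite fun j =>
    isOpen_iInter_of_finite fun _ => isOpen_ne_fun (by fun_prop) (by fun_prop)

section Fibers

variable {V : Type*} [TopologicalSpace V] [MeasurableSpace V] [OpensMeasurableSpace V]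

lemma measurableSet_image_fst_of_isClosed {W : Type*} [TopologicalSpace W] [SigmaCompactSpace W]
    {C : Set (V × W)} (hC : IsClosed C) : MeasurableSet (Prod.fst '' C) := by
  have hunion : Prod.fst '' C = ⋃ n, Prod.fst ''
      {q : V × compactCovering W n | (q.1, (q.2 : W)) ∈ C} := by
    ext v
    refine ⟨?_, fun hv => ?_⟩
    · rintro ⟨⟨v, w⟩, hvw, rfl⟩
      obtain ⟨n, hn⟩ := exists_mem_compactCovering w
      exact mem_iUnion.2 ⟨n, (v, ⟨w, hn⟩), hvw, rfl⟩
    · obtain ⟨_, ⟨v, w⟩, hvw, rfl⟩ := mem_iUnion.1 hv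
      exact ⟨(v, w), hvw, rfl⟩
  rw [hunion]
  refine .iUnion fun n => ?_
  have := isCompact_iff_compactSpace.1 (isCompact_compactCovering W n)
  exact (isClosedMap_fst_of_compactSpace _ (hC.preimage (by fun_prop))).measurableSet

/-- At least `m` points in the fiber means a point in the projection of a closed set of injective
`m`-tuples; those tuples form a locally compact space, so the projection is measurable. -/
lemma measurable_encard_fiber {E : Type*} [TopologicalSpace E] [T2Space E] [LocallyCompactSpace E]
    [SecondCountableTopology E] {Z : Set (V × E)} (hZ : IsClosed Z) {s : Set E}
    (hs : IsLocallyClosed s) : Measurable fun v => {x | x ∈ s ∧ (v, x) ∈ Z}.encard := by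
  refine measurable_of_natCast_le fun m => ?_
  have := hs.locallyCompactSpace
  have : LocallyCompactSpace {x : Fin m → s | Function.Injective x} :=
    isOpen_setOf_injective.isLocallyClosed.locallyCompactSpace
  let C : Set (V × {x : Fin m → s | Function.Injective x}) :=
    {q | ∀ i, (q.1, (q.2.1 i : E)) ∈ Z}
  have hC : IsClosed C := by
    simp only [C, ofPred_forall]
    exact isClosed_iInter fun i => hZ.preimage <| continuous_fst.prodMk <|
      continuous_subtype_val.comp <| (continuous_apply i).comp <|
        continuous_subtype_val.comp continuous_snd
  convert measurableSet_image_fst_of_isClosed hC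
  ext v
  rw [mem_ofPred_eq, natCast_le_encard_iff_exists_injective]
  constructor
  · rintro ⟨x, hx, hxs⟩
    exact ⟨(v, ⟨fun i => ⟨x i, (hxs i).1⟩, fun i j hij => hx (congrArg Subtype.val hij)⟩),
      fun i => (hxs i).2, rfl⟩
  · rintro ⟨⟨v, x, hx⟩, hxZ, rfl⟩
    exact ⟨fun i => x i, Subtype.val_injective.comp hx, fun i => ⟨(x i).2, hxZ i⟩⟩

end Fibers

lemma measurable_encard_periodZeros_cosSum {ι : Type*} [Fintype ι] (p : ι → ℕ) :
    Measurable fun v => (periodZeros (cosSum p v)).encard :=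
  measurable_encard_fiber (Z := {q : (ι → ℝ) × ℝ | cosSum p q.1 q.2 = 0})
    (isClosed_eq (by unfold cosSum; fun_prop) continuous_const) isLocallyClosed_Ico

lemma mul_measure_le_lintegral_of_identDistrib {Ω V : Type*} [MeasurableSpace Ω]
    [MeasurableSpace V] {μ : Measure Ω} {X Y : Ω → V} (hXY : IdentDistrib X Y μ μ)
    {F : V → ℝ≥0∞} (hF : Measurable F) {c : ℝ≥0∞} {E : Set Ω}
    (hc : ∀ ω ∈ E, 2 * c ≤ F (X ω) + F (Y ω)) : c * μ E ≤ ∫⁻ ω, F (X ω) ∂μ := by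
  have hFX : AEMeasurable (fun ω => F (X ω)) μ := hF.comp_aemeasurable hXY.aemeasurable_fst
  have hFY : AEMeasurable (fun ω => F (Y ω)) μ := hF.comp_aemeasurable hXY.aemeasurable_snd
  have hswap : ∫⁻ ω, F (Y ω) ∂μ = ∫⁻ ω, F (X ω) ∂μ := (hXY.comp hF).lintegral_eq.symm
  have hmarkov : 2 * (c * μ E) ≤ 2 * ∫⁻ ω, F (X ω) ∂μ := calc
    2 * (c * μ E) ≤ 2 * c * μ {ω | 2 * c ≤ F (X ω) + F (Y ω)} := by
      rw [mul_assoc]; gcongr; exact hc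
    _ ≤ ∫⁻ ω, F (X ω) + F (Y ω) ∂μ := mul_meas_ge_le_lintegral₀ (hFX.add hFY) _
    _ = ∫⁻ ω, F (X ω) ∂μ + ∫⁻ ω, F (Y ω) ∂μ := lintegral_add_left' hFX _
    _ = 2 * ∫⁻ ω, F (X ω) ∂μ := by rw [two_mul, hswap]
  exact (ENNReal.mul_le_mul_iff_right two_ne_zero ENNReal.ofNat_ne_top).1 hmarkov

lemma identDistrib_comp_of_iid {Ω ι β : Type*} [MeasurableSpace Ω] [MeasurableSpace β] [Countable ι]
    {μ : Measure Ω} {a : ι → Ω → β} (hmeas : ∀ k, AEMeasurable (a k) μ) (hindep : iIndepFun a μ)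
    (hident : ∀ i j, Measure.map (a i) μ = Measure.map (a j) μ) {g : ι → ι}
    (hg : Function.Injective g) :
    IdentDistrib (fun ω k => a k ω) (fun ω k => a (g k) ω) μ μ :=
  .pi (fun k => ⟨hmeas k, hmeas (g k), hident k (g k)⟩) hindep (hindep.precomp hg)

theorem iid_random_cosine_expected_zeros_general {Ω ι : Type*} [MeasurableSpace Ω] [Fintype ι]
    {μ : Measure Ω} {p : ι → ℕ} (hp : Function.Injective p) {σ : Equiv.Perm ι} {D : ℕ}
    (hσ : ∀ k, p k + p (σ k) = D) {a : ι → Ω → ℝ}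
    (ha : IdentDistrib (fun ω k => a k ω) (fun ω k => a (σ k) ω) μ μ) :
    (D : ℝ≥0∞) * μ {ω | ∃ k, a k ω ≠ 0} ≤
      ∫⁻ ω in {ω | ∃ k, a k ω ≠ 0}, Zcount (fun x => ∑ k, a k ω * cos (p k * x)) ∂μ := by
  let count : (ι → ℝ) → ℝ≥0∞ := fun v => (periodZeros (cosSum p v)).encard
  let F : (ι → ℝ) → ℝ≥0∞ := ({0}ᶜ : Set (ι → ℝ)).indicator count
  have hF : Measurable F :=
    (Measurable.of_discrete.comp (measurable_encard_periodZeros_cosSum p)).indicator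
      (measurableSet_singleton 0).compl
  have hF_of_ne {v : ι → ℝ} (hv : v ≠ 0) : F v = count v := indicator_of_mem hv count
  have hE {ω : Ω} : (∃ k, a k ω ≠ 0) ↔ (fun k => a k ω) ≠ 0 := Function.ne_iff.symm
  have hpair : ∀ ω ∈ {ω | ∃ k, a k ω ≠ 0},
      2 * (D : ℝ≥0∞) ≤ F (fun k => a k ω) + F (fun k => a (σ k) ω) := by
    intro ω hω
    have hv : (fun k => a k ω) ≠ 0 := hE.1 hω
    have hvσ : (fun k => a (σ k) ω) ≠ 0 := fun h => hv <| funext fun k => by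
      simpa using congrFun h (σ.symm k)
    rw [hF_of_ne hv, hF_of_ne hvσ]
    simp only [count]
    exact_mod_cast two_mul_le_encard_periodZeros_add hσ fun k => a k ω
  calc (D : ℝ≥0∞) * μ {ω | ∃ k, a k ω ≠ 0}
      ≤ ∫⁻ ω, F (fun k => a k ω) ∂μ := mul_measure_le_lintegral_of_identDistrib ha hF hpair
    _ = ∫⁻ ω in {ω | ∃ k, a k ω ≠ 0}, F (fun k => a k ω) ∂μ :=
      (setLIntegral_eq_of_support_subset fun ω hω => hE.2 fun h => hω (by simp [F, h])).symm
    _ ≤ _ := lintegral_mono fun ω => indicator_le' (fun v hv => encard_periodZeros_le_Zcount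
      (analyticAt_cosSum p v) (cosSum_ne_zero hp hv)) (fun _ _ => zero_le) _

theorem iid_random_cosine_expected_zeros
    {Ω : Type*} [MeasurableSpace Ω] (μ : Measure Ω) [IsProbabilityMeasure μ]
    (L M : ℕ) (hLM : L ≤ M) (hM : 1 ≤ M)
    (a : Fin (M - L + 1) → Ω → ℝ)
    (hmeas : ∀ k, Measurable (a k))
    (hindep : iIndepFun a μ)
    (hident : ∀ i j, Measure.map (a i) μ = Measure.map (a j) μ)
    (hE : 0 < μ {ω | ∃ k, a k ω ≠ 0}) :
    ((L + M : ℕ) : ℝ≥0∞) * μ {ω | ∃ k, a k ω ≠ 0} ≤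
      ∫⁻ ω in {ω | ∃ k, a k ω ≠ 0},
        Zcount (fun x => ∑ k : Fin (M - L + 1), a k ω * Real.cos ((L + (k : ℕ)) * x)) ∂μ := by
  have hrev (k : Fin (M - L + 1)) : L + (k : ℕ) + (L + (Fin.revPerm k : ℕ)) = L + M := by
    rw [Fin.revPerm_apply, Fin.val_rev]
    lia
  simpa using iid_random_cosine_expected_zeros_general (p := fun k : Fin (M - L + 1) => L + (k : ℕ))
    (fun i j hij => Fin.ext (add_left_cancel hij)) hrev
    (identDistrib_comp_of_iid (fun k => (hmeas k).aemeasurable) hindep hident Fin.rev_injective)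
end

section
/- Let K ≥ 0 and let f(x) = ∑_{k=0}^{K} (a_k cos(kx) + b_k sin(kx)) be a real trigonometric polynomial of degree at most K that is not identically zero. Then f has at most 2K zeros in [0, 2π), counted with multiplicity, where the multiplicity of a zero x₀ is the least n ≥ 1 such that the n-th derivative of f at x₀ is nonzero. -/
open Real Set
open scoped ENNReal

/-!
On the real line `f x = z ^ (-K) * P z` with `z = e ^ (i x)` and `P` a nonzero complex polynomial of
degree at most `2 * K`. The exponential factor never vanishes and `x ↦ e ^ (i x)` has nonvanishing
derivative, so the order of vanishing of `f` at a real zero `x` is the multiplicity of the root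
`e ^ (i x)` of `P`. On `[0, 2π)` distinct zeros give distinct roots, and the multiplicities of the
roots of `P` add up to at most its degree.
-/

open Polynomial

theorem ofReal_deriv_of_forall_ofReal_eq {F : ℂ → ℂ} {f : ℝ → ℝ} {x : ℝ}
    (hF : DifferentiableAt ℂ F x) (h : ∀ t : ℝ, (f t : ℂ) = F t) :
    ((deriv f x : ℝ) : ℂ) = deriv F x := by
  have hF' : HasDerivAt F (deriv F x) x := hF.hasDerivAt
  have hf : HasDerivAt f (deriv F x).re x := by
    simpa only [← h, Complex.ofReal_re] using hF'.real_of_complex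
  have hf' : HasDerivAt (fun t : ℝ => F t) ((deriv f x : ℝ) : ℂ) x := by
    simpa only [h] using hf.differentiableAt.hasDerivAt.ofReal_comp
  exact hf'.unique hF'.comp_ofReal

theorem ofReal_iteratedDeriv_of_forall_ofReal_eq {F : ℂ → ℂ} {f : ℝ → ℝ}
    (hF : Differentiable ℂ F) (h : ∀ t : ℝ, (f t : ℂ) = F t) (n : ℕ) (x : ℝ) :
    ((iteratedDeriv n f x : ℝ) : ℂ) = iteratedDeriv n F x := by
  induction n generalizing F f with
  | zero => simpa only [iteratedDeriv_zero] using h x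
  | succ n ih =>
    simpa only [iteratedDeriv_succ'] using
      ih hF.deriv fun t => ofReal_deriv_of_forall_ofReal_eq (hF t) h

theorem iteratedDeriv_eq_zero_of_lt_zeroMult {f : ℝ → ℝ} {x : ℝ} (hx : f x = 0) {n : ℕ}
    (hn : n < zeroMult f x) : iteratedDeriv n f x = 0 := by
  rcases n.eq_zero_or_pos with rfl | hpos
  · rwa [iteratedDeriv_zero]
  · by_contra hne
    exact Nat.notMem_of_lt_sInf hn ⟨hpos, hne⟩

theorem zeroMult_le_analyticOrderAt {F : ℂ → ℂ} {f : ℝ → ℝ} (hF : Differentiable ℂ F)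
    (h : ∀ t : ℝ, (f t : ℂ) = F t) {x : ℝ} (hx : f x = 0) :
    (zeroMult f x : ℕ∞) ≤ analyticOrderAt F x := by
  rw [natCast_le_analyticOrderAt_iff_iteratedDeriv_eq_zero (hF.analyticAt x)]
  intro n hn
  rw [← ofReal_iteratedDeriv_of_forall_ofReal_eq hF h,
    iteratedDeriv_eq_zero_of_lt_zeroMult hx hn, Complex.ofReal_zero]

theorem analyticOrderAt_eval_eq_rootMultiplicity {𝕜 : Type*} [NontriviallyNormedField 𝕜]
    {P : 𝕜[X]} (hP : P ≠ 0) (w : 𝕜) :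
    analyticOrderAt (fun z => P.eval z) w = P.rootMultiplicity w := by
  obtain ⟨Q, hPQ, hQ⟩ := P.exists_eq_pow_rootMultiplicity_mul_and_not_dvd hP w
  rw [AnalyticAt.analyticOrderAt_eq_natCast (AnalyticOnNhd.eval_polynomial P w trivial)]
  refine ⟨fun z => Q.eval z, AnalyticOnNhd.eval_polynomial Q w trivial, ?_, .of_forall fun z => ?_⟩
  · rwa [ne_eq, ← IsRoot.def, ← dvd_iff_isRoot]
  · conv_lhs => rw [hPQ]
    simp only [eval_mul, eval_pow, eval_sub, eval_X, eval_C, smul_eq_mul]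

theorem analyticOrderAt_exp_mul_eval_exp {P : ℂ[X]} (hP : P ≠ 0) (c z : ℂ) :
    analyticOrderAt (fun w => Complex.exp (c * w) * P.eval (Complex.exp (w * Complex.I))) z =
      P.rootMultiplicity (Complex.exp (z * Complex.I)) := by
  have hfactor : AnalyticAt ℂ (fun w => Complex.exp (c * w)) z := by fun_prop
  have hexp : AnalyticAt ℂ (fun w => Complex.exp (w * Complex.I)) z := by fun_prop
  have hderiv : deriv (fun w => Complex.exp (w * Complex.I)) z ≠ 0 := by
    rw [((hasDerivAt_mul_const Complex.I).cexp).deriv]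
    exact mul_ne_zero (Complex.exp_ne_zero _) Complex.I_ne_zero
  have heval : AnalyticAt ℂ (fun w => P.eval w) (Complex.exp (z * Complex.I)) :=
    AnalyticOnNhd.eval_polynomial P _ trivial
  calc analyticOrderAt (fun w => Complex.exp (c * w) * P.eval (Complex.exp (w * Complex.I))) z
      = analyticOrderAt (fun w => Complex.exp (c * w)) z +
          analyticOrderAt ((fun w => P.eval w) ∘ fun w => Complex.exp (w * Complex.I)) z :=
        analyticOrderAt_mul hfactor (heval.comp_of_eq hexp rfl)
    _ = P.rootMultiplicity (Complex.exp (z * Complex.I)) := by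
        rw [hfactor.analyticOrderAt_eq_zero.2 (Complex.exp_ne_zero _), zero_add,
          analyticOrderAt_comp_of_deriv_ne_zero hexp hderiv,
          analyticOrderAt_eval_eq_rootMultiplicity hP]

theorem zeroMult_le_rootMultiplicity {f : ℝ → ℝ} {P : ℂ[X]} {c : ℂ} (hP : P ≠ 0)
    (hf : ∀ t : ℝ, (f t : ℂ) = Complex.exp (c * t) * P.eval (Complex.exp (t * Complex.I)))
    {x : ℝ} (hx : f x = 0) : zeroMult f x ≤ P.rootMultiplicity (Circle.exp x : ℂ) := by
  have hF : Differentiable ℂ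
      fun w => Complex.exp (c * w) * P.eval (Complex.exp (w * Complex.I)) := by
    fun_prop
  have hle := zeroMult_le_analyticOrderAt hF hf hx
  rw [analyticOrderAt_exp_mul_eval_exp hP] at hle
  exact_mod_cast hle

theorem sum_rootMultiplicity_le_natDegree {R ι : Type*} [CommRing R] [IsDomain R] (P : R[X])
    {φ : ι → R} {s : Finset ι} (hφ : Set.InjOn φ s) :
    ∑ i ∈ s, P.rootMultiplicity (φ i) ≤ P.natDegree := by
  classical
  calc ∑ i ∈ s, P.rootMultiplicity (φ i)
      = ∑ z ∈ s.image φ, P.roots.count z := by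
        simp only [Finset.sum_image hφ, count_roots]
    _ ≤ ∑ z ∈ P.roots.toFinset, P.roots.count z :=
        Finset.sum_le_sum_of_ne_zero fun z _ hz =>
          Multiset.mem_toFinset.2 (Multiset.count_ne_zero.1 hz)
    _ = P.roots.card := Multiset.toFinset_sum_count_eq _
    _ ≤ P.natDegree := card_roots' P

theorem Zcount_le_natDegree {f : ℝ → ℝ} {P : ℂ[X]} {c : ℂ} (hP : P ≠ 0)
    (hf : ∀ t : ℝ, (f t : ℂ) = Complex.exp (c * t) * P.eval (Complex.exp (t * Complex.I))) :
    Zcount f ≤ P.natDegree := by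
  refine ENNReal.summable.tsum_le_of_sum_le fun s => ?_
  have hinj : Set.InjOn (fun x : {x : ℝ // x ∈ Set.Ico (0 : ℝ) (2 * π) ∧ f x = 0} =>
      (Circle.exp x : ℂ)) s := fun x _ y _ hxy =>
    Subtype.ext (Circle.exp_injOn_Ico (by rw [sub_zero]) x.2.1 y.2.1 (Circle.ext hxy))
  have hsum : ∑ x ∈ s, zeroMult f x ≤ P.natDegree :=
    (Finset.sum_le_sum fun x _ => zeroMult_le_rootMultiplicity hP hf x.2.2).trans
      (sum_rootMultiplicity_le_natDegree P hinj)
  exact_mod_cast hsum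

/-- The algebraic polynomial `P` behind the trigonometric polynomial
`f z = ∑ k ≤ K, (a k * cos (k z) + b k * sin (k z))`: with `w = e ^ (i z)`, one has
`f z = w ^ (-K) * P w`. The truncated subtraction `K - k` is exact as `k ≤ K` in the sum. -/
noncomputable def trigNumerator (K : ℕ) (a b : ℕ → ℂ) : ℂ[X] :=
  ∑ k ∈ Finset.range (K + 1),
    (C ((a k - b k * Complex.I) / 2) * X ^ (K + k) + C ((a k + b k * Complex.I) / 2) * X ^ (K - k))

theorem natDegree_trigNumerator_le (K : ℕ) (a b : ℕ → ℂ) :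
    (trigNumerator K a b).natDegree ≤ 2 * K := by
  refine natDegree_sum_le_of_forall_le _ _ fun k hk => ?_
  have hkK : k ≤ K := Finset.mem_range_succ_iff.1 hk
  exact natDegree_add_le_of_degree_le ((natDegree_C_mul_X_pow_le _ _).trans (by lia))
    ((natDegree_C_mul_X_pow_le _ _).trans (by lia))

theorem sum_cos_add_sin_eq_exp_mul_eval_trigNumerator (K : ℕ) (a b : ℕ → ℂ) (z : ℂ) :
    ∑ k ∈ Finset.range (K + 1), (a k * Complex.cos (k * z) + b k * Complex.sin (k * z)) =
      Complex.exp (-(K * Complex.I) * z) *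
        (trigNumerator K a b).eval (Complex.exp (z * Complex.I)) := by
  rw [trigNumerator, eval_finsetSum, Finset.mul_sum]
  refine Finset.sum_congr rfl fun k hk => ?_
  have hkK : k ≤ K := Finset.mem_range_succ_iff.1 hk
  have hpos : Complex.exp (-(K * Complex.I) * z) * Complex.exp (z * Complex.I) ^ (K + k) =
      Complex.exp (k * z * Complex.I) := by
    rw [← Complex.exp_nat_mul, ← Complex.exp_add]
    push_cast
    ring_nf
  have hneg : Complex.exp (-(K * Complex.I) * z) * Complex.exp (z * Complex.I) ^ (K - k) =
      Complex.exp (-(k * z) * Complex.I) := by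
    rw [← Complex.exp_nat_mul, ← Complex.exp_add, Nat.cast_sub hkK]
    ring_nf
  simp only [eval_add, eval_mul, eval_C, eval_pow, eval_X, Complex.cos, Complex.sin]
  linear_combination (-((a k - b k * Complex.I) / 2)) * hpos -
    ((a k + b k * Complex.I) / 2) * hneg

theorem trig_poly_zero_count_le (K : ℕ) (a b : ℕ → ℝ)
    (h : ∃ x, (∑ k ∈ Finset.range (K + 1),
        (a k * Real.cos ((k : ℝ) * x) + b k * Real.sin ((k : ℝ) * x))) ≠ 0) :
    Zcount (fun x => ∑ k ∈ Finset.range (K + 1),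
        (a k * Real.cos ((k : ℝ) * x) + b k * Real.sin ((k : ℝ) * x))) ≤ (2 * K : ℝ≥0∞) := by
  set P : ℂ[X] := trigNumerator K (fun k => a k) (fun k => b k)
  have hf (t : ℝ) : ((∑ k ∈ Finset.range (K + 1),
      (a k * Real.cos (k * t) + b k * Real.sin (k * t)) : ℝ) : ℂ) =
      Complex.exp (-(K * Complex.I) * t) * P.eval (Complex.exp (t * Complex.I)) := by
    rw [← sum_cos_add_sin_eq_exp_mul_eval_trigNumerator]
    push_cast
    rfl
  have hP : P ≠ 0 := by
    obtain ⟨x, hx⟩ := h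
    rintro hP
    refine hx (Complex.ofReal_eq_zero.1 ?_)
    rw [hf, hP, eval_zero, mul_zero]
  calc Zcount _ ≤ P.natDegree := Zcount_le_natDegree hP hf
    _ ≤ 2 * K := mod_cast natDegree_trigNumerator_le K _ _
end
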